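/- arXiv:2605.11025 — 2 statements merged into one kernel-verified Lean document; each statement's English description precedes it below -/
import Mathlib

section
/- Every simple triangle-free graph that admits a path decomposition of width at most 3 has chromatic number at most 3. -/
/-- `G` admits a path decomposition of width at most `w`: a finite sequence of bags
`Bag 0, …, Bag (m-1)` such that every vertex lies in some bag, every edge has both
endpoints in some bag, the bags containing any fixed vertex occur at consecutive
indices, and every bag has at most `w + 1` vertices. -/
def HasPathDecompOfWidth {V : Type*} [DecidableEq V] (G : SimpleGraph V) (w : ℕ) : Prop :=
  ∃ (m : ℕ) (Bag : Fin m → Finset V),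
    (∀ v : V, ∃ i, v ∈ Bag i) ∧
    (∀ u v : V, G.Adj u v → ∃ i, u ∈ Bag i ∧ v ∈ Bag i) ∧
    (∀ (v : V) (i j l : Fin m), i ≤ j → j ≤ l → v ∈ Bag i → v ∈ Bag l → v ∈ Bag j) ∧
    (∀ i, (Bag i).card ≤ w + 1)

/-!
Order the vertices by the first bag containing them. When a new vertex enters, the earlier vertices
with a neighbor still to come all lie in its bag, so there are at most `w` of them. Color greedily
with `w` colors in this order, never letting these boundary vertices form an independent set on
which every color appears. A new vertex that sees every color on such a boundary is adjacent to
all of it, so the boundary is independent because `G` is triangle-free, a contradiction: a color is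
always available. If the new boundary has `w` vertices, contains the new vertex and is independent,
then the new vertex has at most one earlier neighbor, and since `w ≥ 3` it can be colored so that
some color is missing from the new boundary.
-/

open Finset Function

theorem exists_notMem_insert_ne_univ {α : Type*} [Fintype α] [DecidableEq α] {P Q : Finset α}
    (hP : P ≠ univ) (hQ : #Q + 1 < Fintype.card α) : ∃ γ ∉ Q, insert γ P ≠ univ := by
  by_cases hPQ : P ⊆ Q
  · obtain ⟨γ, hγ⟩ : ∃ γ, γ ∉ Q := by
      by_contra! h
      simp [eq_univ_of_forall h] at hQ
    refine ⟨γ, hγ, fun h ↦ ?_⟩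
    have : #(insert γ P) ≤ #Q + 1 := (card_insert_le γ P).trans (by gcongr)
    rw [h, card_univ] at this
    omega
  · obtain ⟨γ, hγP, hγQ⟩ := not_subset.1 hPQ
    exact ⟨γ, hγQ, by rwa [insert_eq_of_mem hγP]⟩

section PartialColoring

variable {V α : Type*} {G : SimpleGraph V} {c : V → α} {γ : α} {v : V} {S B : Finset V}

/-- `c` restricts to a proper coloring of the subgraph of `G` induced by `S`. Colorings are total
functions so that their type does not change when `S` grows. -/
def IsProperOn (G : SimpleGraph V) (c : V → α) (S : Finset V) : Prop :=
  (S : Set V).Pairwise fun u v ↦ G.Adj u v → c u ≠ c v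

variable [DecidableEq V]

theorem IsProperOn.update_insert (h : IsProperOn G c S) (hv : v ∉ S)
    (hγ : ∀ u ∈ S, G.Adj v u → c u ≠ γ) : IsProperOn G (update c v γ) (insert v S) := by
  have update_eq {u : V} (hu : u ∈ S) : update c v γ u = c u :=
    update_of_ne (ne_of_mem_of_not_mem hu hv) γ c
  unfold IsProperOn
  rw [coe_insert, Set.pairwise_insert]
  refine ⟨fun u hu w hw huw ↦ ?_, fun u hu _ ↦ ?_⟩
  · simpa only [update_eq hu, update_eq hw] using h hu hw huw
  · rw [update_self, update_eq hu]
    exact ⟨fun hadj ↦ (hγ u hu hadj).symm, fun hadj ↦ hγ u hu hadj.symm⟩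

variable [DecidableEq α]

theorem image_update_of_notMem (hv : v ∉ B) : B.image (update c v γ) = B.image c :=
  image_congr fun _ hu ↦ update_of_ne (ne_of_mem_of_not_mem hu hv) γ c

theorem image_update_of_mem (hv : v ∈ B) :
    B.image (update c v γ) = insert γ ((B.erase v).image c) := by
  rw [← insert_erase hv, image_insert, update_self, image_update_of_notMem (notMem_erase v B),
    insert_erase hv]

end PartialColoring

section ColorExtension

variable {V α : Type*} [Fintype α] [DecidableEq α] {G : SimpleGraph V} {c : V → α} {v : V}
  {A B : Finset V}

/-- An independent set meeting every color class of `c`. If the boundary of the colored part is of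
this kind, a new vertex adjacent to all of it cannot be colored. -/
def IsPanchromaticIndepSet (G : SimpleGraph V) (c : V → α) (A : Finset V) : Prop :=
  G.IsIndepSet (A : Set V) ∧ A.image c = univ

namespace IsPanchromaticIndepSet

theorem card_le (h : IsPanchromaticIndepSet G c A) : Fintype.card α ≤ #A := by
  rw [← card_univ, ← h.2]
  exact card_image_le

theorem of_subset (h : IsPanchromaticIndepSet G c B) (hBA : B ⊆ A)
    (hA : #A ≤ Fintype.card α) : IsPanchromaticIndepSet G c A :=
  eq_of_subset_of_card_le hBA (hA.trans h.card_le) ▸ h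

end IsPanchromaticIndepSet

theorem exists_color_forall_adj_ne (htf : G.CliqueFree 3) (hA : #A ≤ Fintype.card α)
    (hpan : ¬ IsPanchromaticIndepSet G c A) (v : V) : ∃ γ, ∀ u ∈ A, G.Adj v u → c u ≠ γ := by
  classical
  by_contra! h
  have hN : IsPanchromaticIndepSet G c (A.filter (G.Adj v)) := by
    refine ⟨(SimpleGraph.isIndepSet_neighborSet_of_triangleFree G htf v).mono fun u hu ↦ ?_,
      eq_univ_of_forall fun γ ↦ ?_⟩
    · exact (mem_filter.1 hu).2
    · obtain ⟨u, huA, hvu, huγ⟩ := h γ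
      exact mem_image.2 ⟨u, mem_filter.2 ⟨huA, hvu⟩, huγ⟩
  exact hpan (hN.of_subset (filter_subset _ _) hA)

variable [DecidableEq V]

theorem exists_color_not_panchromatic_update_of_isIndepSet (hα : 3 ≤ Fintype.card α)
    (hA : #A ≤ Fintype.card α) (hpan : ¬ IsPanchromaticIndepSet G c A) (hvB : v ∈ B)
    (hBA : B ⊆ insert v A) (hB : G.IsIndepSet (B : Set V)) (hBcard : Fintype.card α ≤ #B) :
    ∃ γ, (∀ u ∈ A, G.Adj v u → c u ≠ γ) ∧ ¬ IsPanchromaticIndepSet G (update c v γ) B := by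
  have hBvA : B.erase v ⊆ A := subset_insert_iff.1 hBA
  have himage : (B.erase v).image c ≠ univ := fun h ↦
    hpan (.of_subset ⟨hB.mono (coe_subset.2 (erase_subset v B)), h⟩ hBvA hA)
  have hsdiff : #(A \ B.erase v) ≤ 1 := by
    rw [card_sdiff_of_subset hBvA, card_erase_of_mem hvB]
    omega
  have hQ : #((A \ B.erase v).image c) + 1 < Fintype.card α := by
    have : #((A \ B.erase v).image c) ≤ #(A \ B.erase v) := card_image_le
    omega
  obtain ⟨γ, hγ, hne⟩ := exists_notMem_insert_ne_univ himage hQ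
  refine ⟨γ, fun u hu hvu huγ ↦ hγ ?_, fun h ↦ hne ?_⟩
  · have huB : u ∉ B.erase v := fun huB ↦ hB hvB (mem_of_mem_erase huB) hvu.ne hvu
    exact mem_image.2 ⟨u, mem_sdiff.2 ⟨hu, huB⟩, huγ⟩
  · rw [← image_update_of_mem hvB, h.2]

theorem exists_color_not_panchromatic_update (htf : G.CliqueFree 3) (hα : 3 ≤ Fintype.card α)
    (hA : #A ≤ Fintype.card α) (hpan : ¬ IsPanchromaticIndepSet G c A) (hBA : B ⊆ insert v A) :
    ∃ γ, (∀ u ∈ A, G.Adj v u → c u ≠ γ) ∧ ¬ IsPanchromaticIndepSet G (update c v γ) B := by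
  by_cases hB : v ∈ B ∧ G.IsIndepSet (B : Set V) ∧ Fintype.card α ≤ #B
  · obtain ⟨hvB, hindep, hcard⟩ := hB
    exact exists_color_not_panchromatic_update_of_isIndepSet hα hA hpan hvB hBA hindep hcard
  · obtain ⟨γ, hγ⟩ := exists_color_forall_adj_ne htf hA hpan v
    refine ⟨γ, hγ, fun h ↦ ?_⟩
    have hvB : v ∉ B := fun hvB ↦ hB ⟨hvB, h.1, h.card_le⟩
    have hc : IsPanchromaticIndepSet G c B := ⟨h.1, (image_update_of_notMem hvB).symm.trans h.2⟩
    exact hpan (hc.of_subset ((subset_insert_iff_of_notMem hvB).1 hBA) hA)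

end ColorExtension

section Layout

variable {V ι : Type*} [LE ι] {G : SimpleGraph V} {l : V → ι} {S : Finset V} {u v : V}

open Classical in
/-- The inner vertex boundary of `S`: the vertices of `S` with a neighbor outside `S`. -/
noncomputable def innerBoundary (G : SimpleGraph V) (S : Finset V) : Finset V :=
  {u ∈ S | ∃ x ∉ S, G.Adj u x}

theorem mem_innerBoundary : u ∈ innerBoundary G S ↔ u ∈ S ∧ ∃ x ∉ S, G.Adj u x := by
  simp only [innerBoundary, mem_filter]

theorem innerBoundary_insert_subset [DecidableEq V] :
    innerBoundary G (insert v S) ⊆ insert v (innerBoundary G S) := by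
  intro u hu
  obtain ⟨hu, x, hx, hux⟩ := mem_innerBoundary.1 hu
  rw [mem_insert, not_or] at hx
  rcases mem_insert.1 hu with rfl | hu
  · exact mem_insert_self _ _
  · exact mem_insert_of_mem (mem_innerBoundary.2 ⟨hu, x, hx.2, hux⟩)

/-- `S` is an initial segment of the vertices listed in order of `l`, with ties broken
arbitrarily. -/
def IsInitialSegment (l : V → ι) (S : Finset V) : Prop :=
  ∀ u ∈ S, ∀ v ∉ S, l u ≤ l v

theorem IsInitialSegment.of_insert [DecidableEq V] (h : IsInitialSegment l (insert v S))
    (hv : ∀ u ∈ S, l u ≤ l v) : IsInitialSegment l S := by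
  intro u hu x hx
  by_cases hxv : x = v
  · exact hxv ▸ hv u hu
  · exact h u (mem_insert_of_mem hu) x (by simp [hxv, hx])

/-- Listing the vertices in order of `l` witnesses that `G` has vertex separation number at most
`w`. -/
def HasVertexSeparationLE (G : SimpleGraph V) (l : V → ι) (w : ℕ) : Prop :=
  ∀ S : Finset V, IsInitialSegment l S → #(innerBoundary G S) ≤ w

end Layout

namespace HasVertexSeparationLE

variable {V ι : Type*} [LinearOrder ι] {G : SimpleGraph V} {l : V → ι} {w : ℕ}

theorem exists_isProperOn {S : Finset V} (hl : HasVertexSeparationLE G l w)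
    (hw : 3 ≤ w) (htf : G.CliqueFree 3) (hS : IsInitialSegment l S) :
    ∃ c : V → Fin w, IsProperOn G c S ∧ ¬ IsPanchromaticIndepSet G c (innerBoundary G S) := by
  classical
  induction S using induction_on_max_value l with
  | empty =>
    refine ⟨fun _ ↦ ⟨0, by omega⟩, by simp [IsProperOn], fun h ↦ ?_⟩
    have : w ≤ 0 := by simpa [innerBoundary] using h.card_le
    omega
  | insert v S hv hmax ih =>
    have hS' : IsInitialSegment l S := hS.of_insert hmax
    obtain ⟨c, hproper, hpan⟩ := ih hS'
    obtain ⟨γ, hγ, hpan'⟩ := exists_color_not_panchromatic_update htf (by simpa using hw)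
      (by simpa using hl S hS') hpan (innerBoundary_insert_subset (v := v))
    refine ⟨update c v γ, hproper.update_insert hv fun u hu hvu ↦ ?_, hpan'⟩
    exact hγ u (mem_innerBoundary.2 ⟨hu, v, hv, hvu.symm⟩) hvu

theorem colorable [Finite V] (hl : HasVertexSeparationLE G l w) (hw : 3 ≤ w)
    (htf : G.CliqueFree 3) : G.Colorable w := by
  have := Fintype.ofFinite V
  obtain ⟨c, hc, -⟩ := hl.exists_isProperOn (S := univ) hw htf
    fun _ _ v hv ↦ absurd (mem_univ v) hv
  exact ⟨.mk c fun {u v} huv ↦ hc (mem_univ u) (mem_univ v) huv.ne huv⟩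

end HasVertexSeparationLE

namespace HasPathDecompOfWidth

variable {V : Type*} [DecidableEq V] {G : SimpleGraph V} {w : ℕ}

theorem finite (h : HasPathDecompOfWidth G w) : Finite V := by
  obtain ⟨m, Bag, hcover, -⟩ := h
  refine Set.finite_univ_iff.1 ((univ.biUnion Bag).finite_toSet.subset fun v _ ↦ ?_)
  simpa using hcover v

theorem exists_hasVertexSeparationLE (h : HasPathDecompOfWidth G w) :
    ∃ (m : ℕ) (l : V → Fin m), HasVertexSeparationLE G l w := by
  have := h.finite
  obtain ⟨m, Bag, hcover, hedge, hconsec, hcard⟩ := h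
  choose first mem_first first_le using fun v ↦
    Set.exists_min_image {i | v ∈ Bag i} id (Set.toFinite _) (hcover v)
  refine ⟨m, first, fun S hS ↦ ?_⟩
  rcases (innerBoundary G S).eq_empty_or_nonempty with hempty | ⟨u, hu⟩
  · simp [hempty]
  obtain ⟨-, x, hxS, -⟩ := mem_innerBoundary.1 hu
  obtain ⟨v, hvS, hmin⟩ := Set.exists_min_image (S : Set V)ᶜ first (Set.toFinite _) ⟨x, hxS⟩
  have hsub : innerBoundary G S ⊆ (Bag (first v)).erase v := by
    intro u hu
    obtain ⟨huS, x, hxS, hux⟩ := mem_innerBoundary.1 hu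
    obtain ⟨i, hui, hxi⟩ := hedge u x hux
    have hvi : first v ≤ i := (hmin x hxS).trans (first_le x i hxi)
    exact mem_erase.2 ⟨ne_of_mem_of_not_mem huS hvS,
      hconsec u (first u) (first v) i (hS u huS v hvS) hvi (mem_first u) hui⟩
  calc
    #(innerBoundary G S) ≤ #((Bag (first v)).erase v) := card_le_card hsub
    _ = #(Bag (first v)) - 1 := card_erase_of_mem (mem_first v)
    _ ≤ w := Nat.sub_le_of_le_add (hcard (first v))

end HasPathDecompOfWidth

theorem stmt_11_general {V : Type*} [DecidableEq V] {G : SimpleGraph V} {w : ℕ} (hw : 3 ≤ w)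
    (htf : G.CliqueFree 3) (hpw : HasPathDecompOfWidth G w) : G.chromaticNumber ≤ w := by
  have := hpw.finite
  obtain ⟨m, l, hl⟩ := hpw.exists_hasVertexSeparationLE
  exact (hl.colorable hw htf).chromaticNumber_le

/-- Every simple triangle-free graph that admits a path decomposition of width at most 3
has chromatic number at most 3. -/
theorem stmt_11 {V : Type*} [DecidableEq V] (G : SimpleGraph V)
    (htf : G.CliqueFree 3) (hpw : HasPathDecompOfWidth G 3) :
    G.chromaticNumber ≤ 3 :=
  stmt_11_general le_rfl htf hpw
end

section
/- Let G₁₄ be the simple graph on vertex set {1,…,14} whose edge set is exactly {1,5},{1,7},{1,8},{1,9},{1,11},{2,4},{2,5},{2,8},{2,10},{2,11},{2,14},{3,4},{3,5},{3,6},{4,7},{4,9},{6,7},{6,8},{6,10},{6,12},{6,13},{9,10},{9,12},{9,14},{11,12},{11,13},{13,14}. Then G₁₄ has exactly 27 edges, is triangle-free, and has chromatic number 4. -/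
/-- The edge list of the graph `G₁₄` on vertex set `{1, …, 14}`. -/
def edges14 : List (ℕ × ℕ) :=
  [(1,5),(1,7),(1,8),(1,9),(1,11),
   (2,4),(2,5),(2,8),(2,10),(2,11),(2,14),
   (3,4),(3,5),(3,6),
   (4,7),(4,9),
   (6,7),(6,8),(6,10),(6,12),(6,13),
   (9,10),(9,12),(9,14),
   (11,12),(11,13),
   (13,14)]

/-- The simple graph `G₁₄` on vertex set `{1, …, 14}` (modeled as `Fin 14`, with
vertex `i : Fin 14` representing the label `i + 1`) whose edges are exactly those
listed in `edges14`. -/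
def G14 : SimpleGraph (Fin 14) :=
  SimpleGraph.fromRel (fun u v => ((u.val + 1, v.val + 1) ∈ edges14))

/-!
Up to a permutation of the colors, a coloring with three colors gives the adjacent vertices `0` and
`8` (as elements of `Fin 14`) the colors `0` and `1`. Each of the three possible colors of vertex
`5` then propagates: a vertex with neighbors of two colors must have the third one. In each case
two adjacent vertices are forced to have the same color.
-/

section

variable {V : Type*} {G : SimpleGraph V}

theorem cliqueFree_three_iff_forall_adj :
    G.CliqueFree 3 ↔ ∀ u v, G.Adj u v → ∀ w, G.Adj u w → ¬G.Adj v w := by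
  classical
  constructor
  · intro hG u v huv w huw hvw
    exact hG {u, v, w} (SimpleGraph.is3Clique_triple_iff.mpr ⟨huv, huw, hvw⟩)
  · intro hG s hs
    obtain ⟨u, v, w, huv, huw, hvw, -⟩ := SimpleGraph.is3Clique_iff.mp hs
    exact hG u v huv w huw hvw

variable {α : Type*}

theorem exists_coloring_eq_and_eq_of_adj (C : G.Coloring α) {u v : V} (huv : G.Adj u v)
    {a b : α} (hab : a ≠ b) : ∃ C' : G.Coloring α, C' u = a ∧ C' v = b := by
  have two_pretransitive : MulAction.IsMultiplyPretransitive (Equiv.Perm α) α 2 :=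
    Equiv.Perm.isMultiplyPretransitive α 2
  obtain ⟨σ, hu, hv⟩ :=
    MulAction.is_two_pretransitive_iff.mp two_pretransitive (C.valid huv) hab
  exact ⟨G.recolorOfEquiv σ C, hu, hv⟩

-- The defaults are for concrete finite graphs, where the side conditions are decidable.
theorem color_eq_of_adj_of_adj {C : G.Coloring α} {x u v : V} {a b c : α}
    (hu : C u = a) (hv : C v = b) (hxu : G.Adj x u := by decide) (hxv : G.Adj x v := by decide)
    (colors : ∀ i, i = a ∨ i = b ∨ i = c := by decide) : C x = c :=
  ((colors (C x)).resolve_left (hu ▸ C.valid hxu)).resolve_left (hv ▸ C.valid hxv)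

end

instance : DecidableRel G14.Adj :=
  inferInstanceAs (DecidableRel (SimpleGraph.fromRel _).Adj)

theorem card_edgeFinset_G14 : G14.edgeFinset.card = 27 := by
  decide +kernel

theorem cliqueFree_three_G14 : G14.CliqueFree 3 :=
  cliqueFree_three_iff_forall_adj.mpr (by decide +kernel)

section ThreeColors

variable {C : G14.Coloring (Fin 3)}

theorem color_five_ne_zero (h0 : C 0 = 0) (h8 : C 8 = 1) : C 5 ≠ 0 := by
  intro h5
  have h9 : C 9 = 2 := color_eq_of_adj_of_adj h5 h8
  have h11 : C 11 = 2 := color_eq_of_adj_of_adj h5 h8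
  have h10 : C 10 = 1 := color_eq_of_adj_of_adj h0 h11
  have h1 : C 1 = 0 := color_eq_of_adj_of_adj h10 h9
  have h12 : C 12 = 2 := color_eq_of_adj_of_adj h5 h10
  have h13 : C 13 = 2 := color_eq_of_adj_of_adj h1 h8
  exact C.valid (by decide : G14.Adj 12 13) (h12.trans h13.symm)

theorem color_five_ne_one (h0 : C 0 = 0) (h8 : C 8 = 1) : C 5 ≠ 1 := by
  intro h5
  have h6 : C 6 = 2 := color_eq_of_adj_of_adj h0 h5
  have h3 : C 3 = 0 := color_eq_of_adj_of_adj h8 h6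
  have h2 : C 2 = 2 := color_eq_of_adj_of_adj h3 h5
  have h4 : C 4 = 1 := color_eq_of_adj_of_adj h0 h2
  have h1 : C 1 = 2 := color_eq_of_adj_of_adj h3 h4
  have h7 : C 7 = 2 := color_eq_of_adj_of_adj h0 h5
  exact C.valid (by decide : G14.Adj 1 7) (h1.trans h7.symm)

theorem color_five_ne_two (h0 : C 0 = 0) (h8 : C 8 = 1) : C 5 ≠ 2 := by
  intro h5
  have h7 : C 7 = 1 := color_eq_of_adj_of_adj h0 h5
  have h9 : C 9 = 0 := color_eq_of_adj_of_adj h8 h5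
  have h1 : C 1 = 2 := color_eq_of_adj_of_adj h9 h7
  have h3 : C 3 = 0 := color_eq_of_adj_of_adj h8 h1
  have h2 : C 2 = 1 := color_eq_of_adj_of_adj h3 h5
  have h4 : C 4 = 1 := color_eq_of_adj_of_adj h0 h1
  exact C.valid (by decide : G14.Adj 2 4) (h2.trans h4.symm)

end ThreeColors

theorem not_colorable_three_G14 : ¬G14.Colorable 3 := by
  rintro ⟨C⟩
  obtain ⟨C', h0, h8⟩ := exists_coloring_eq_and_eq_of_adj C (by decide : G14.Adj 0 8)
    (by decide : (0 : Fin 3) ≠ 1)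
  have three_colors : ∀ i : Fin 3, i = 0 ∨ i = 1 ∨ i = 2 := by decide
  rcases three_colors (C' 5) with h5 | h5 | h5
  · exact color_five_ne_zero h0 h8 h5
  · exact color_five_ne_one h0 h8 h5
  · exact color_five_ne_two h0 h8 h5

/-- A proper coloring of `G14` with four colors. It extends the partial coloring forced by
color `0` at vertices `0` and `5` and color `1` at vertex `8`, using the fourth color only at vertex
`13`, whose neighbors already have all three other colors. -/
def fourColoringG14 : G14.Coloring (Fin 4) :=
  SimpleGraph.Coloring.mk ![0, 0, 1, 2, 2, 0, 1, 1, 1, 2, 1, 2, 2, 3] (by decide +kernel)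

/-- `G₁₄` has exactly 27 edges, is triangle-free, and has chromatic number 4. -/
theorem stmt_15 :
    G14.edgeSet.ncard = 27 ∧ G14.CliqueFree 3 ∧ G14.chromaticNumber = 4 := by
  have hcard : G14.edgeSet.ncard = 27 := by
    rw [← SimpleGraph.coe_edgeFinset, Set.ncard_coe_finset, card_edgeFinset_G14]
  have hchrom : G14.chromaticNumber = 4 :=
    SimpleGraph.chromaticNumber_eq_iff_colorable_not_colorable.mpr
      ⟨⟨fourColoringG14⟩, not_colorable_three_G14⟩
  exact ⟨hcard, cliqueFree_three_G14, hchrom⟩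
end
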